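/- G(q⁶)H(q) − qG(q)H(q⁶) = χ(−q)/χ(−q³), where χ(q)=(−q;q²)_∞ and G, H are the Rogers–Ramanujan series in product form. -/

import Mathlib

/-- Rogers–Ramanujan series `G` in product form: `G(q) = 1/((q;q⁵)_∞ (q⁴;q⁵)_∞)`. -/
noncomputable def RRG (q : ℂ) : ℂ :=
  1 / ((∏' k : ℕ, (1 - q ^ (5 * k + 1))) * ∏' k : ℕ, (1 - q ^ (5 * k + 4)))

/-- Rogers–Ramanujan series `H` in product form: `H(q) = 1/((q²;q⁵)_∞ (q³;q⁵)_∞)`. -/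
noncomputable def RRH (q : ℂ) : ℂ :=
  1 / ((∏' k : ℕ, (1 - q ^ (5 * k + 2))) * ∏' k : ℕ, (1 - q ^ (5 * k + 3)))

/-- `χ(q) = (−q;q²)_∞ = ∏_{n≥0}(1 + q^(2n+1))`. -/
noncomputable def rchi (q : ℂ) : ℂ := ∏' n : ℕ, (1 + q ^ (2 * n + 1))

/-- partial product `(z;q)_N` -/
noncomputable def qfp (z q : ℂ) (N : ℕ) : ℂ := ∏ k ∈ Finset.range N, (1 - z * q ^ k)

/-- `(z;q)_∞` -/
noncomputable def qip (z q : ℂ) : ℂ := ∏' k : ℕ, (1 - z * q ^ k)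

/-- `1/(q;q)_k`, extended by zero to negative `k`. -/
noncomputable def qrec (q : ℂ) (k : ℤ) : ℂ := if 0 ≤ k then (qfp q q k.toNat)⁻¹ else 0

/-- theta term -/
noncomputable def thT (z q : ℂ) (n : ℤ) : ℂ := (-1) ^ n * z ^ n * q ^ (n * (n - 1) / 2)

lemma qip_summable (z : ℂ) {q : ℂ} (hq : ‖q‖ < 1) : Summable (fun k : ℕ => ‖-(z * q ^ k)‖) := by
  simp only [norm_neg, norm_mul, norm_pow]
  exact (summable_geometric_of_lt_one (norm_nonneg _) hq).mul_left _

lemma qip_multipliable (z : ℂ) {q : ℂ} (hq : ‖q‖ < 1) :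
    Multipliable (fun k : ℕ => 1 - z * q ^ k) := by
  simpa [sub_eq_add_neg] using multipliable_one_add_of_summable (qip_summable z hq)

open Filter Topology in
lemma qfp_tendsto (z : ℂ) {q : ℂ} (hq : ‖q‖ < 1) :
    Tendsto (qfp z q) atTop (𝓝 (qip z q)) :=
  (qip_multipliable z hq).tendsto_prod_tprod_nat

lemma one_sub_mul_pow_ne {z q : ℂ} (hq : ‖q‖ < 1) (hz : ‖z‖ < 1) (k : ℕ) :
    1 - z * q ^ k ≠ 0 := by
  intro h
  have h1 : z * q ^ k = 1 := (sub_eq_zero.mp h).symm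
  have h2 : ‖z * q ^ k‖ < 1 := by
    rw [norm_mul, norm_pow]
    have := pow_le_one₀ (n := k) (norm_nonneg q) hq.le
    nlinarith [norm_nonneg z, norm_nonneg q]
  rw [h1] at h2
  simp at h2

lemma qip_ne {z q : ℂ} (hq : ‖q‖ < 1) (hz : ‖z‖ < 1) : qip z q ≠ 0 := by
  have := tprod_one_add_ne_zero_of_summable (f := fun k : ℕ => -(z * q ^ k))
    (fun k => by simpa [sub_eq_add_neg] using one_sub_mul_pow_ne hq hz k) (qip_summable z hq)
  simpa [qip, sub_eq_add_neg] using this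

lemma qfp_ne {z q : ℂ} (hq : ‖q‖ < 1) (hz : ‖z‖ < 1) (N : ℕ) : qfp z q N ≠ 0 :=
  Finset.prod_ne_zero_iff.mpr fun k _ => one_sub_mul_pow_ne hq hz k

lemma qfp_succ (z q : ℂ) (N : ℕ) : qfp z q (N + 1) = qfp z q N * (1 - z * q ^ N) :=
  Finset.prod_range_succ _ _

lemma qrec_rec {q : ℂ} (hq : ‖q‖ < 1) (k : ℤ) : qrec q (k - 1) = (1 - q ^ k) * qrec q k := by
  rcases lt_trichotomy k 0 with h | h | h
  · rw [qrec, qrec, if_neg (by omega), if_neg (by omega), mul_zero]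
  · subst h; simp [qrec]
  · obtain ⟨j, rfl⟩ : ∃ j : ℕ, k = j + 1 := ⟨(k - 1).toNat, by omega⟩
    rw [qrec, qrec, if_pos (by omega), if_pos (by omega)]
    have e1 : ((j : ℤ) + 1 - 1).toNat = j := by omega
    have e2 : ((j : ℤ) + 1).toNat = j + 1 := by omega
    have h1 := one_sub_mul_pow_ne hq hq j
    have h2 := qfp_ne hq hq j
    rw [e1, e2, qfp_succ]
    have e3 : q ^ ((j : ℤ) + 1) = q * q ^ j := by
      rw [← pow_succ']; exact_mod_cast rfl
    rw [e3]
    field_simp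

lemma tri_succ (n : ℤ) : (n + 1) * (n + 1 - 1) / 2 = n * (n - 1) / 2 + n := by
  have : (n + 1) * (n + 1 - 1) = n * (n - 1) + n * 2 := by ring
  rw [this, Int.add_mul_ediv_right _ _ (by norm_num)]

lemma two_tri (n : ℤ) : 2 * (n * (n - 1) / 2) = n * (n - 1) := by
  apply Int.mul_ediv_cancel'
  have := Int.even_mul_pred_self n
  exact this.two_dvd

lemma thT_succ {z q : ℂ} (hz : z ≠ 0) (hq : q ≠ 0) (n : ℤ) :
    thT z q (n + 1) = -(z * q ^ n) * thT z q n := by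
  unfold thT
  rw [tri_succ, zpow_add₀ hq, zpow_add₀ hz, zpow_add₀ (by norm_num : (-1 : ℂ) ≠ 0)]
  simp; ring

lemma thT_ne {z q : ℂ} (hz : z ≠ 0) (hq : q ≠ 0) (n : ℤ) : thT z q n ≠ 0 := by
  unfold thT
  exact mul_ne_zero (mul_ne_zero (zpow_ne_zero _ (by norm_num)) (zpow_ne_zero _ hz))
    (zpow_ne_zero _ hq)

open Filter Topology in
lemma thT_summable {z q : ℂ} (hz : z ≠ 0) (hq0 : q ≠ 0) (hq : ‖q‖ < 1) :
    Summable (fun n => ‖thT z q n‖) := by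
  have ht : ∀ c : ℝ, Tendsto (fun n : ℕ => c * ‖q‖ ^ n) atTop (𝓝 0) := fun c => by
    simpa using (tendsto_pow_atTop_nhds_zero_of_lt_one (norm_nonneg q) hq).const_mul c
  apply Summable.of_nat_of_neg
  · refine summable_of_ratio_test_tendsto_lt_one (l := 0) one_pos
      (Eventually.of_forall fun n => by simpa using thT_ne hz hq0 _) ?_
    refine (ht ‖z‖).congr fun n => ?_
    have h := thT_ne hz hq0 (n : ℤ)
    have h' : ‖thT z q n‖ ≠ 0 := by simpa using h
    push_cast
    rw [thT_succ hz hq0]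
    simp only [norm_mul, norm_norm, norm_neg, norm_pow, zpow_natCast]
    field_simp
  · refine summable_of_ratio_test_tendsto_lt_one (l := 0) one_pos
      (Eventually.of_forall fun n => by simpa using thT_ne hz hq0 _) ?_
    refine (ht (‖q‖ / ‖z‖)).congr fun n => ?_
    have h := thT_ne hz hq0 (-((n + 1 : ℕ) : ℤ))
    have h' : ‖thT z q (-((n + 1 : ℕ) : ℤ))‖ ≠ 0 := by simpa using h
    have h3 : ‖z‖ ≠ 0 := by simpa using hz
    have h4 : ‖q‖ ≠ 0 := by simpa using hq0
    have e : (-(n : ℤ)) = -((n + 1 : ℕ) : ℤ) + 1 := by push_cast; ring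
    rw [e, thT_succ hz hq0]
    simp only [norm_mul, norm_norm, norm_neg, norm_inv, norm_pow, zpow_natCast, zpow_neg]
    field_simp
    rw [pow_succ]
    ring

lemma fin_summable (z q : ℂ) (N : ℕ) :
    Summable (fun n : ℤ => thT z q n * (qrec q (N + n) * qrec q (N - n))) := by
  apply summable_of_ne_finset_zero (s := Finset.Icc (-(N : ℤ)) N)
  intro n hn
  simp only [Finset.mem_Icc, not_and_or, not_le] at hn
  rcases hn with h | h
  · rw [qrec, if_neg (by omega)]; simp
  · rw [mul_comm (qrec _ _), qrec, if_neg (by omega)]; simp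

lemma fin_jtp {z q : ℂ} (hz : z ≠ 0) (hq0 : q ≠ 0) (hq : ‖q‖ < 1) (N : ℕ) :
    qfp z q N * qfp (q / z) q N =
      qfp q q (2 * N) * ∑' n : ℤ, thT z q n * (qrec q (N + n) * qrec q (N - n)) := by
  induction N with
  | zero =>
    rw [tsum_eq_single 0]
    · simp [qfp, qrec, thT]
    · intro n hn
      rcases lt_or_gt_of_ne hn with h | h
      · rw [qrec, if_neg (by simpa using h)]; simp
      · rw [mul_comm (qrec _ _), qrec, if_neg (by simpa using h)]; simp
  | succ N ih =>
    have hs := (fin_summable z q N).hasSum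
    have hs' := (fin_summable z q (N + 1)).hasSum
    set S := ∑' n : ℤ, thT z q n * (qrec q (N + n) * qrec q (N - n)) with hS
    set S' := ∑' n : ℤ, thT z q n * (qrec q ((N + 1 : ℕ) + n) * qrec q ((N + 1 : ℕ) - n)) with hS'
    have h1 := hs.mul_left (1 + q ^ (2 * N + 1))
    have h2 := ((Equiv.subRight (1 : ℤ)).hasSum_iff.mpr hs).mul_left (z * q ^ N)
    have h3 := ((Equiv.addRight (1 : ℤ)).hasSum_iff.mpr hs).mul_left (q ^ (N + 1) / z)
    have h4 := (h1.sub h2).sub h3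
    have h5 := hs'.mul_left ((1 - q ^ (2 * N + 1)) * (1 - q ^ (2 * N + 2)))
    have key : (1 + q ^ (2 * N + 1)) * S - z * q ^ N * S - q ^ (N + 1) / z * S
        = (1 - q ^ (2 * N + 1)) * (1 - q ^ (2 * N + 2)) * S' := by
      refine h4.unique (Eq.subst (motive := fun f => HasSum f _) ?_ h5)
      refine funext fun n => Eq.symm ?_
      simp only [Function.comp, Equiv.subRight_apply, Equiv.coe_addRight]
      have t1 : thT z q (n - 1) = -(thT z q n * (q / (z * q ^ n))) := by
        have := thT_succ hz hq0 (n - 1)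
        rw [sub_add_cancel, zpow_sub₀ hq0, zpow_one] at this
        have hqn := zpow_ne_zero n hq0
        rw [this]; field_simp
      have t2 := thT_succ hz hq0 n
      have r1 := qrec_rec hq (N + 1 + n)
      have r2 := qrec_rec hq (N + n)
      have r3 := qrec_rec hq (N + 1 - n)
      have r4 := qrec_rec hq (N - n)
      rw [show (N : ℤ) + 1 + n - 1 = N + n by ring] at r1
      rw [show (N : ℤ) + 1 - n - 1 = N - n by ring] at r3
      rw [show (N : ℤ) + (n - 1) = N + n - 1 by ring,
        show (N : ℤ) - (n - 1) = N + 1 - n by ring,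
        show (N : ℤ) + (n + 1) = N + 1 + n by ring,
        show (N : ℤ) - (n + 1) = N - n - 1 by ring]
      push_cast
      rw [t1, t2, r2, r4, r1, r3]
      generalize qrec q (N + 1 + n) = R
      generalize qrec q (N + 1 - n) = T
      generalize thT z q n = t
      simp only [zpow_add₀ hq0, zpow_sub₀ hq0, zpow_one, zpow_natCast]
      have hqn := zpow_ne_zero n hq0
      generalize q ^ n = x at *
      have e1 : q ^ (2 * N + 1) = q ^ N * q ^ N * q := by ring
      have e2 : q ^ (2 * N + 2) = q ^ N * q ^ N * q * q := by ring
      rw [e1, e2, pow_succ]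
      generalize q ^ N = y
      field_simp
      ring
    have e : 2 * (N + 1) = 2 * N + 1 + 1 := by ring
    rw [qfp_succ, qfp_succ, e, qfp_succ, qfp_succ]
    have e1 : q * q ^ (2 * N) = q ^ (2 * N + 1) := by ring
    have e2 : q * q ^ (2 * N + 1) = q ^ (2 * N + 2) := by ring
    rw [e1, e2]
    calc _ = (qfp z q N * qfp (q / z) q N) * ((1 - z * q ^ N) * (1 - q / z * q ^ N)) := by ring
      _ = qfp q q (2 * N) * ((1 + q ^ (2 * N + 1)) * S - z * q ^ N * S - q ^ (N + 1) / z * S) := by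
        rw [ih]
        field_simp
        ring
      _ = _ := by rw [key]; ring

open Filter Topology in
lemma qrec_tendsto {q : ℂ} (hq : ‖q‖ < 1) :
    Tendsto (qrec q) atTop (𝓝 (qip q q)⁻¹) := by
  have h1 : Tendsto (fun k : ℤ => (qfp q q k.toNat)⁻¹) atTop (𝓝 (qip q q)⁻¹) := by
    refine ((qfp_tendsto q hq).comp ?_).inv₀ (qip_ne hq hq)
    exact tendsto_atTop_atTop.mpr fun b => ⟨b, fun a ha => by omega⟩
  refine h1.congr' ?_
  filter_upwards [eventually_ge_atTop 0] with k hk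
  rw [qrec, if_pos hk]

lemma qrec_bdd {q : ℂ} (hq : ‖q‖ < 1) : ∃ C : ℝ, 0 ≤ C ∧ ∀ k, ‖qrec q k‖ ≤ C := by
  have h := ((qfp_tendsto q hq).inv₀ (qip_ne hq hq)).norm.bddAbove_range
  obtain ⟨C, hC⟩ := h
  have hC' : ∀ n : ℕ, ‖(qfp q q n)⁻¹‖ ≤ C := fun n => hC ⟨n, rfl⟩
  have h0 : 0 ≤ C := (norm_nonneg _).trans (hC' 0)
  refine ⟨C, h0, fun k => ?_⟩
  unfold qrec
  split_ifs
  · exact hC' _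
  · simpa using h0

open Filter Topology in
/-- Jacobi triple product. -/
lemma jtp {z q : ℂ} (hz : z ≠ 0) (hq0 : q ≠ 0) (hq : ‖q‖ < 1) :
    ∑' n : ℤ, thT z q n = qip z q * qip (q / z) q * qip q q := by
  obtain ⟨C, hC0, hC⟩ := qrec_bdd hq
  have hne := qip_ne hq hq
  have hL : Tendsto (fun N => qfp z q N * qfp (q / z) q N) atTop
      (𝓝 (qip z q * qip (q / z) q)) := (qfp_tendsto z hq).mul (qfp_tendsto _ hq)
  have hT : Tendsto (fun N : ℕ => ∑' n : ℤ, thT z q n * (qrec q (N + n) * qrec q (N - n))) atTop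
      (𝓝 (∑' n : ℤ, thT z q n * ((qip q q)⁻¹ * (qip q q)⁻¹))) := by
    refine tendsto_tsum_of_dominated_convergence (bound := fun n => ‖thT z q n‖ * (C * C))
      ((thT_summable hz hq0 hq).mul_right _) ?_ ?_
    · intro n
      refine Tendsto.const_mul _ (Tendsto.mul ?_ ?_)
      · refine (qrec_tendsto hq).comp ?_
        exact tendsto_atTop_add_const_right _ _ tendsto_natCast_atTop_atTop
      · refine (qrec_tendsto hq).comp ?_
        exact tendsto_atTop_add_const_right _ _ tendsto_natCast_atTop_atTop
    · refine Eventually.of_forall fun N n => ?_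
      rw [norm_mul, norm_mul]
      gcongr
      · exact hC _
      · exact hC _
  have h2 : Tendsto (fun N => qfp q q (2 * N)) atTop (𝓝 (qip q q)) :=
    (qfp_tendsto q hq).comp (tendsto_id.const_mul_atTop' (by norm_num))
  have hR := h2.mul hT
  have := tendsto_nhds_unique hL (hR.congr fun N => (fin_jtp hz hq0 hq N).symm)
  rw [this, tsum_mul_right]
  field_simp

/-- signed monomial `(-1)^a q^e` -/
noncomputable def sM (q : ℂ) (a e : ℤ) : ℂ := (-1) ^ a * q ^ e

lemma sM_mul {q : ℂ} (hq : q ≠ 0) (a e b f : ℤ) : sM q a e * sM q b f = sM q (a + b) (e + f) := by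
  unfold sM
  rw [zpow_add₀ hq, zpow_add₀ (by norm_num : (-1 : ℂ) ≠ 0)]; ring

lemma sM_congr {q : ℂ} {a e b f : ℤ} (c : ℤ) (h : a = b + 2 * c) (h2 : 2 * e = 2 * f) :
    sM q a e = sM q b f := by
  unfold sM
  have : e = f := by omega
  subst this
  rw [h, zpow_add₀ (by norm_num : (-1 : ℂ) ≠ 0), zpow_mul]; simp

lemma thT_sM (q : ℂ) (hq : q ≠ 0) (a b : ℕ) (n : ℤ) :
    thT (q ^ a) (q ^ b) n = sM q n (a * n + b * (n * (n - 1) / 2)) := by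
  unfold thT sM
  rw [zpow_add₀ hq, zpow_mul, zpow_mul, zpow_natCast, zpow_natCast]; ring

lemma thT_neg_one (q : ℂ) (b : ℕ) (n : ℤ) :
    thT (-1) (q ^ b) n = sM q 0 (b * (n * (n - 1) / 2)) := by
  unfold thT sM
  rw [zpow_mul, zpow_natCast, ← mul_zpow]; simp

/-- residue class decomposition of the lattice -/
def latE : Fin 5 × (ℤ × ℤ) ≃ ℤ × ℤ where
  toFun p := (p.2.1 + 5 * p.2.2 + (p.1 : ℕ), p.2.1)
  invFun p := (⟨((p.1 - p.2) % 5).toNat, by omega⟩, (p.2, (p.1 - p.2) / 5))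
  left_inv := by
    rintro ⟨d, n, v⟩
    have := d.2
    simp only [Prod.mk.injEq, Fin.ext_iff]
    refine ⟨by omega, trivial, by omega⟩
  right_inv := by
    rintro ⟨m, n⟩
    simp only [Prod.mk.injEq, and_true]
    omega

def latE0 : ℤ × ℤ ≃ ℤ × ℤ where
  toFun p := (p.2 + 2 * p.1, -p.1)
  invFun p := (-p.2, p.1 + 2 * p.2)
  left_inv := by rintro ⟨l, k⟩; simp only [Prod.mk.injEq]; omega
  right_inv := by rintro ⟨l, k⟩; simp only [Prod.mk.injEq]; omega

def latE4 : ℤ × ℤ ≃ ℤ × ℤ where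
  toFun p := (1 - p.2 - 2 * p.1, p.1 - 1)
  invFun p := (p.2 + 1, 1 - p.1 - 2 * (p.2 + 1))
  left_inv := by rintro ⟨l, k⟩; simp only [Prod.mk.injEq]; omega
  right_inv := by rintro ⟨l, k⟩; simp only [Prod.mk.injEq]; omega

def latE1 : ℤ × ℤ ≃ ℤ × ℤ where
  toFun p := (2 * p.1 - p.2, -p.1)
  invFun p := (-p.2, -2 * p.2 - p.1)
  left_inv := by rintro ⟨l, k⟩; simp only [Prod.mk.injEq]; omega
  right_inv := by rintro ⟨l, k⟩; simp only [Prod.mk.injEq]; omega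

def latE3 : ℤ × ℤ ≃ ℤ × ℤ where
  toFun p := (1 + p.2 - 2 * p.1, p.1 - 1)
  invFun p := (p.2 + 1, p.1 + 2 * (p.2 + 1) - 1)
  left_inv := by rintro ⟨l, k⟩; simp only [Prod.mk.injEq]; omega
  right_inv := by rintro ⟨l, k⟩; simp only [Prod.mk.injEq]; omega

def latE2 : ℤ × ℤ ≃ ℤ × ℤ where
  toFun p := (-p.1 - 4 * p.2 - 1, p.2)
  invFun p := (-p.1 - 4 * p.2 - 1, p.2)
  left_inv := by rintro ⟨l, k⟩; simp only [Prod.mk.injEq, and_true]; omega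
  right_inv := by rintro ⟨l, k⟩; simp only [Prod.mk.injEq, and_true]; omega

lemma theta_identity {q : ℂ} (hq0 : q ≠ 0) (hq : ‖q‖ < 1) :
    (∑' n, thT (q ^ 1) (q ^ 2) n) * (∑' n, thT (-1) (q ^ 3) n) =
      2 * ((∑' n, thT (q ^ 12) (q ^ 30) n) * (∑' n, thT (q ^ 1) (q ^ 5) n)) -
      2 * (q * ((∑' n, thT (q ^ 6) (q ^ 30) n) * (∑' n, thT (q ^ 2) (q ^ 5) n))) := by
  have hp : ∀ a : ℕ, q ^ a ≠ 0 := fun a => pow_ne_zero a hq0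
  have hn : ∀ a : ℕ, a ≠ 0 → ‖q ^ a‖ < 1 := fun a ha => by
    rw [norm_pow]; exact pow_lt_one₀ (norm_nonneg _) hq ha
  have s1 := thT_summable (hp 1) (hp 2) (hn 2 (by norm_num))
  have s2 := thT_summable (z := -1) (by norm_num) (hp 3) (hn 3 (by norm_num))
  have s3 := thT_summable (hp 12) (hp 30) (hn 30 (by norm_num))
  have s4 := thT_summable (hp 1) (hp 5) (hn 5 (by norm_num))
  have s5 := thT_summable (hp 6) (hp 30) (hn 30 (by norm_num))
  have s6 := thT_summable (hp 2) (hp 5) (hn 5 (by norm_num))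
  rw [tsum_mul_tsum_of_summable_norm s1 s2, tsum_mul_tsum_of_summable_norm s3 s4,
    tsum_mul_tsum_of_summable_norm s5 s6]
  have hs := summable_mul_of_summable_norm s1 s2
  set F : ℤ × ℤ → ℂ := fun x => thT (q ^ 1) (q ^ 2) x.1 * thT (-1) (q ^ 3) x.2 with hF
  have hFM : ∀ m n, F (m, n) = sM q m (m * m + 3 * (n * (n - 1) / 2)) := by
    intro m n
    simp only [hF]
    rw [thT_sM q hq0, thT_neg_one, sM_mul hq0]
    refine sM_congr 0 (by ring) ?_
    push_cast
    linear_combination 2 * two_tri m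
  rw [← latE.tsum_eq F, Summable.tsum_prod (f := fun c => F (latE c)) ((latE.summable_iff).mpr hs), tsum_fintype, Fin.sum_univ_five]
  have h0 : ∑' p : ℤ × ℤ, F (latE (0, p)) =
      ∑' x : ℤ × ℤ, thT (q ^ 12) (q ^ 30) x.1 * thT (q ^ 1) (q ^ 5) x.2 := by
    rw [← latE0.tsum_eq]
    refine tsum_congr ?_
    rintro ⟨l, k⟩
    simp only [latE, latE0, Equiv.coe_fn_mk]
    rw [hFM, thT_sM q hq0, thT_sM q hq0, sM_mul hq0]
    have e4 : (((0 : Fin 5) : ℕ) : ℤ) = 0 := rfl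
    rw [e4]
    refine sM_congr (-2 * l) (by ring) ?_
    have a1 := two_tri (k + 2 * l)
    have a2 := two_tri l
    have a3 := two_tri k
    push_cast
    linear_combination 3 * a1 - 30 * a2 - 5 * a3
  have h4 : ∑' p : ℤ × ℤ, F (latE (4, p)) =
      ∑' x : ℤ × ℤ, thT (q ^ 12) (q ^ 30) x.1 * thT (q ^ 1) (q ^ 5) x.2 := by
    rw [← latE4.tsum_eq]
    refine tsum_congr ?_
    rintro ⟨l, k⟩
    simp only [latE, latE4, Equiv.coe_fn_mk]
    rw [hFM, thT_sM q hq0, thT_sM q hq0, sM_mul hq0]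
    have a1 := two_tri (1 - k - 2 * l)
    have a2 := two_tri l
    have a3 := two_tri k
    have e4 : (((4 : Fin 5) : ℕ) : ℤ) = 4 := rfl
    rw [e4]
    refine sM_congr (l - k) (by ring) ?_
    push_cast
    linear_combination 3 * a1 - 30 * a2 - 5 * a3
  have h1 : ∑' p : ℤ × ℤ, F (latE (1, p)) =
      -(q * ∑' x : ℤ × ℤ, thT (q ^ 6) (q ^ 30) x.1 * thT (q ^ 2) (q ^ 5) x.2) := by
    rw [← latE1.tsum_eq, ← neg_mul, ← tsum_mul_left]
    refine tsum_congr ?_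
    rintro ⟨l, k⟩
    simp only [latE, latE1, Equiv.coe_fn_mk]
    have eq1 : -q = sM q 1 1 := by simp [sM]
    rw [hFM, thT_sM q hq0, thT_sM q hq0, sM_mul hq0, eq1, sM_mul hq0]
    have a1 := two_tri (2 * l - k)
    have a2 := two_tri l
    have a3 := two_tri k
    have e4 : (((1 : Fin 5) : ℕ) : ℤ) = 1 := rfl
    rw [e4]
    refine sM_congr (-2 * l - k) (by ring) ?_
    push_cast
    linear_combination 3 * a1 - 30 * a2 - 5 * a3
  have h3 : ∑' p : ℤ × ℤ, F (latE (3, p)) =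
      -(q * ∑' x : ℤ × ℤ, thT (q ^ 6) (q ^ 30) x.1 * thT (q ^ 2) (q ^ 5) x.2) := by
    rw [← latE3.tsum_eq, ← neg_mul, ← tsum_mul_left]
    refine tsum_congr ?_
    rintro ⟨l, k⟩
    simp only [latE, latE3, Equiv.coe_fn_mk]
    have eq1 : -q = sM q 1 1 := by simp [sM]
    rw [hFM, thT_sM q hq0, thT_sM q hq0, sM_mul hq0, eq1, sM_mul hq0]
    have a1 := two_tri (1 + k - 2 * l)
    have a2 := two_tri l
    have a3 := two_tri k
    have e4 : (((3 : Fin 5) : ℕ) : ℤ) = 3 := rfl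
    rw [e4]
    refine sM_congr (l - 1) (by ring) ?_
    push_cast
    linear_combination 3 * a1 - 30 * a2 - 5 * a3
  have h2 : ∑' p : ℤ × ℤ, F (latE (2, p)) = 0 := by
    have : ∑' p : ℤ × ℤ, F (latE (2, p)) = -∑' p : ℤ × ℤ, F (latE (2, p)) := by
      conv_lhs => rw [← latE2.tsum_eq]
      rw [← tsum_neg]
      refine tsum_congr ?_
      rintro ⟨n, v⟩
      simp only [latE, latE2, Equiv.coe_fn_mk]
      have eq1 : ∀ x : ℂ, -x = sM q 1 0 * x := by simp [sM]
      rw [hFM, hFM, eq1, sM_mul hq0]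
      have a1 := two_tri (-n - 4 * v - 1)
      have a2 := two_tri n
      have e4 : (((2 : Fin 5) : ℕ) : ℤ) = 2 := rfl
      rw [e4]
      refine sM_congr (-n - 2 * v - 1) (by ring) ?_
      linear_combination 3 * a1 - 3 * a2
    linear_combination this / 2
  rw [h0, h1, h2, h3, h4]
  ring

lemma tprod_eq_qip (q : ℂ) (a b : ℕ) : ∏' k : ℕ, (1 - q ^ (a * k + b)) = qip (q ^ b) (q ^ a) := by
  unfold qip
  refine tprod_congr fun k => ?_
  rw [← pow_mul, ← pow_add, add_comm]

lemma qfp_split (z q : ℂ) (m N : ℕ) :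
    qfp z q (m * N) = ∏ j ∈ Finset.range m, qfp (z * q ^ j) (q ^ m) N := by
  induction N with
  | zero => simp [qfp]
  | succ N ih =>
    simp only [qfp_succ, Finset.prod_mul_distrib, ← ih]
    rw [Nat.mul_succ]
    unfold qfp
    rw [Finset.prod_range_add]
    congr 1
    refine Finset.prod_congr rfl fun j _ => ?_
    rw [← pow_mul, mul_assoc, ← pow_add, add_comm]

open Filter Topology in
lemma qip_split (z : ℂ) {q : ℂ} (hq : ‖q‖ < 1) {m : ℕ} (hm : 0 < m) :
    qip z q = ∏ j ∈ Finset.range m, qip (z * q ^ j) (q ^ m) := by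
  have hqm : ‖q ^ m‖ < 1 := by
    rw [norm_pow]; exact pow_lt_one₀ (norm_nonneg _) hq hm.ne'
  have h1 : Tendsto (fun N => qfp z q (m * N)) atTop (𝓝 (qip z q)) :=
    (qfp_tendsto z hq).comp (tendsto_id.const_mul_atTop' hm)
  have h2 : Tendsto (fun N => ∏ j ∈ Finset.range m, qfp (z * q ^ j) (q ^ m) N) atTop
      (𝓝 (∏ j ∈ Finset.range m, qip (z * q ^ j) (q ^ m))) :=
    tendsto_finsetProd _ fun j _ => qfp_tendsto _ hqm
  exact tendsto_nhds_unique h1 (h2.congr fun N => (qfp_split z q m N).symm)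

lemma npow_lt {q : ℂ} (hq : ‖q‖ < 1) {a : ℕ} (ha : a ≠ 0) : ‖q ^ a‖ < 1 := by
  rw [norm_pow]; exact pow_lt_one₀ (norm_nonneg _) hq ha

lemma jtp_pow {q : ℂ} (hq0 : q ≠ 0) (hq : ‖q‖ < 1) (a b c : ℕ) (hc : a + b = c) (hc0 : c ≠ 0) :
    ∑' n, thT (q ^ a) (q ^ c) n = qip (q ^ a) (q ^ c) * qip (q ^ b) (q ^ c) * qip (q ^ c) (q ^ c) := by
  rw [jtp (pow_ne_zero _ hq0) (pow_ne_zero _ hq0) (npow_lt hq hc0)]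
  congr 3
  subst hc
  rw [pow_add]
  field_simp

lemma qip_five {q : ℂ} (hq : ‖q‖ < 1) :
    qip q q = qip (q ^ 1) (q ^ 5) * qip (q ^ 2) (q ^ 5) * qip (q ^ 3) (q ^ 5) *
      qip (q ^ 4) (q ^ 5) * qip (q ^ 5) (q ^ 5) := by
  rw [qip_split q hq (m := 5) (by norm_num)]
  simp only [Finset.prod_range_succ, Finset.prod_range_zero, ← pow_succ', one_mul]

lemma qip_two {q : ℂ} (hq : ‖q‖ < 1) :
    qip q q = qip (q ^ 1) (q ^ 2) * qip (q ^ 2) (q ^ 2) := by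
  rw [qip_split q hq (m := 2) (by norm_num)]
  simp only [Finset.prod_range_succ, Finset.prod_range_zero, ← pow_succ', one_mul]

lemma qip_pow_ne {q : ℂ} (hq : ‖q‖ < 1) (a b : ℕ) (ha : a ≠ 0) (hb : b ≠ 0) :
    qip (q ^ a) (q ^ b) ≠ 0 := qip_ne (npow_lt hq hb) (npow_lt hq ha)

lemma RRG_eq {q : ℂ} (hq0 : q ≠ 0) (hq : ‖q‖ < 1) :
    RRG q = (∑' n, thT (q ^ 2) (q ^ 5) n) / qip q q := by
  have h1 := qip_pow_ne hq 1 5 (by norm_num) (by norm_num)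
  have h2 := qip_pow_ne hq 2 5 (by norm_num) (by norm_num)
  have h3 := qip_pow_ne hq 3 5 (by norm_num) (by norm_num)
  have h4 := qip_pow_ne hq 4 5 (by norm_num) (by norm_num)
  have h5 := qip_pow_ne hq 5 5 (by norm_num) (by norm_num)
  rw [RRG, tprod_eq_qip, tprod_eq_qip, jtp_pow hq0 hq 2 3 5 rfl (by norm_num), qip_five hq]
  field_simp

lemma RRH_eq {q : ℂ} (hq0 : q ≠ 0) (hq : ‖q‖ < 1) :
    RRH q = (∑' n, thT (q ^ 1) (q ^ 5) n) / qip q q := by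
  have h1 := qip_pow_ne hq 1 5 (by norm_num) (by norm_num)
  have h2 := qip_pow_ne hq 2 5 (by norm_num) (by norm_num)
  have h3 := qip_pow_ne hq 3 5 (by norm_num) (by norm_num)
  have h4 := qip_pow_ne hq 4 5 (by norm_num) (by norm_num)
  have h5 := qip_pow_ne hq 5 5 (by norm_num) (by norm_num)
  rw [RRH, tprod_eq_qip, tprod_eq_qip, jtp_pow hq0 hq 1 4 5 rfl (by norm_num), qip_five hq]
  generalize qip (q ^ 1) (q ^ 5) = P1 at *
  field_simp

lemma rchi_neg (q : ℂ) : rchi (-q) = qip (q ^ 1) (q ^ 2) := by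
  rw [rchi, ← tprod_eq_qip]
  refine tprod_congr fun k => ?_
  rw [Odd.neg_pow ⟨k, rfl⟩]; ring

lemma qip_euler {q : ℂ} (hq : ‖q‖ < 1) : qip (-q) q * qip q q = qip (q ^ 2) (q ^ 2) := by
  unfold qip
  rw [← (qip_multipliable (-q) hq).tprod_mul (qip_multipliable q hq)]
  refine tprod_congr fun k => ?_
  ring

lemma qip_neg_one {q : ℂ} (hq : ‖q‖ < 1) : qip (-1) q = 2 * qip (-q) q := by
  unfold qip
  rw [tprod_eq_zero_mul' (f := fun k : ℕ => 1 - -1 * q ^ k)]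
  · congr 1
    · norm_num
    · refine tprod_congr fun k => ?_
      ring
  · refine (qip_multipliable (-q) hq).congr fun k => ?_
    ring

lemma psi_eq {q : ℂ} (hq0 : q ≠ 0) (hq : ‖q‖ < 1) :
    ∑' n, thT (-1) q n = 2 * qip (-q) q * qip (-q) q * qip q q := by
  rw [jtp (by norm_num) hq0 hq, qip_neg_one hq, div_neg, div_one]

lemma RRG_zero : RRG 0 = 1 := by simp [RRG]

lemma RRH_zero : RRH 0 = 1 := by simp [RRH]

lemma rchi_zero : rchi 0 = 1 := by simp [rchi]

/-- `G(q⁶)H(q) − q G(q)H(q⁶) = χ(−q)/χ(−q³)`. -/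
theorem rr_forty_3_8 (q : ℂ) (hq : ‖q‖ < 1) :
    RRG (q ^ 6) * RRH q - q * RRG q * RRH (q ^ 6) =
      rchi (-q) / rchi (-q ^ 3) := by
  rcases eq_or_ne q 0 with rfl | hq0
  · simp [RRG_zero, RRH_zero, rchi_zero]
  have hq6 := npow_lt hq (a := 6) (by norm_num)
  have hq3 := npow_lt hq (a := 3) (by norm_num)
  have hq60 := pow_ne_zero 6 hq0
  have hq30 := pow_ne_zero 3 hq0
  have key := theta_identity hq0 hq
  rw [jtp_pow hq0 hq 1 1 2 rfl (by norm_num), psi_eq hq30 hq3] at key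
  have e1 := qip_two hq
  have e2 := qip_two hq3
  have e3 := qip_euler hq3
  rw [RRG_eq hq0 hq, RRH_eq hq0 hq, RRG_eq hq60 hq6, RRH_eq hq60 hq6, rchi_neg, rchi_neg]
  simp only [← pow_mul] at e2 e3 ⊢
  norm_num only at e2 e3 key ⊢
  have n1 := qip_ne hq hq
  have n6 := qip_ne hq6 hq6
  have n3 := qip_ne hq3 hq3
  have nO : qip (q ^ 3) (q ^ 6) ≠ 0 := qip_pow_ne hq 3 6 (by norm_num) (by norm_num)
  generalize (∑' n, thT (q ^ 12) (q ^ 30) n) = A at *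
  generalize (∑' n, thT (q ^ 6) (q ^ 30) n) = B at *
  generalize (∑' n, thT (q ^ 2) (q ^ 5) n) = C at *
  generalize (∑' n, thT (q ^ 1) (q ^ 5) n) = D at *
  generalize qip (q ^ 6) (q ^ 6) = f6 at *
  generalize qip (q ^ 3) (q ^ 6) = O3 at *
  generalize qip (q ^ 3) (q ^ 3) = f3 at *
  generalize qip (-q ^ 3) (q ^ 3) = d3 at *
  generalize qip (q ^ 2) (q ^ 2) = f2 at *
  generalize qip (q ^ 1) (q ^ 2) = O1 at *
  generalize qip q q = f1 at *
  have hd : O3 * d3 = 1 := by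
    apply mul_right_cancel₀ n6
    linear_combination d3 * (-e2) + e3
  field_simp
  linear_combination (-O3 / 2) * key - O1 * f6 * e1 + (O1 ^ 2 * f2 * d3 * f3) * hd + O1 ^ 2 * f2 * e3
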